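/- Under a scaling of the heterogeneous key predistribution model with on/off channels satisfying the scaling condition Λ_1(n) = α_n λ_1(n) = c_n (log n)/n with lim_{n→∞} c_n = c, if c < 1 then the probability that the random graph G(n; μ, K_n, P_n, α_n) has no isolated nodes tends to 0 as n → ∞. -/

import Mathlib

/-!
Second moment method for the number of isolated vertices of a single class `i`. Let `R` be one or
two vertices of class `i` with prescribed key rings. Given these, the remaining vertices are joined
to `R` independently of each other, so the probability that `R` has no neighbour outside itself is
a power of a one-vertex average.

For `R = {x}` this average is exactly `1 - Λ`. For `R = {x, y}` it is `1 - 2 Λ + O(Λ ^ 2)` when the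
two rings are disjoint, because missing the one ring and missing the other are then negatively
correlated events. When the rings meet, only the crude bound `1 - 2 Λ + α Λ` holds, which loses a
factor `exp (α n Λ)`; but the rings meet with probability `p = p_ii`, and `α p ≤ Λ / μ i`, so this
case contributes `O((n Λ) ^ 2 exp (n Λ) / n)`. Since `n Λ ≤ d log n` with `d < 1`, this is
negligible, and so is the inverse of the mean number of isolated vertices, which is of order
`exp (n Λ) / n`.
-/

open Filter

/-- Probability that a uniformly random `b`-subset of a `P`-set avoids a fixed `a`-subset. -/
noncomputable def avoidProb (P a b : ℕ) : ℝ := ((P - a).choose b : ℝ) / (P.choose b : ℝ)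

/-- `p_{ab}` : probability that independent uniformly random key rings of sizes
`a` and `b` (from a pool of size `P`) intersect. -/
noncomputable def pEdge (P a b : ℕ) : ℝ := 1 - avoidProb P a b

/-- `λ_i` : mean edge probability of a class-`i` node in the inhomogeneous random key graph. -/
noncomputable def lamb {r : ℕ} (μ : Fin (r + 1) → ℝ) (K : Fin (r + 1) → ℕ) (P : ℕ)
    (i : Fin (r + 1)) : ℝ :=
  ∑ j, μ j * pEdge P (K i) (K j)

/-- A configuration of the model: a class for each vertex, a key ring for each vertex,
and an on/off state for each (unordered) channel. -/
abbrev Config (n r P : ℕ) := (Fin n → Fin (r + 1)) × (Fin n → Finset (Fin P)) × (Sym2 (Fin n) → Bool)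

/-- Probability weight of a configuration: classes are i.i.d. with law `μ`; given its class `i`,
a vertex's key ring is uniform among the `C(P, K i)` subsets of size `K i`; channels over
distinct pairs are i.i.d. Bernoulli(`α`) (diagonal channel variables are forced to `false`). -/
noncomputable def wt {n r P : ℕ} (μ : Fin (r + 1) → ℝ) (K : Fin (r + 1) → ℕ) (α : ℝ)
    (c : Config n r P) : ℝ :=
  (∏ x : Fin n, μ (c.1 x)) *
    (∏ x : Fin n, if (c.2.1 x).card = K (c.1 x) then ((P.choose (K (c.1 x)) : ℝ))⁻¹ else 0) *
    (∏ e : Sym2 (Fin n),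
      if e.IsDiag then (if c.2.2 e then 0 else 1) else (if c.2.2 e then α else 1 - α))

open Classical in
/-- Probability of an event under the heterogeneous key predistribution model
with on/off channels. -/
noncomputable def pr {n r P : ℕ} (μ : Fin (r + 1) → ℝ) (K : Fin (r + 1) → ℕ) (α : ℝ)
    (E : Config n r P → Prop) : ℝ :=
  ∑ c : Config n r P, if E c then wt μ K α c else 0

/-- Two vertices are adjacent iff their key rings intersect and the channel between them is on. -/
def Adj {n r P : ℕ} (c : Config n r P) (x y : Fin n) : Prop :=
  x ≠ y ∧ ((c.2.1 x) ∩ (c.2.1 y)).Nonempty ∧ c.2.2 s(x, y) = true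

/-- The random graph `G(n; μ, K, P, α)` as a simple graph. -/
def graphOf {n r P : ℕ} (c : Config n r P) : SimpleGraph (Fin n) :=
  SimpleGraph.fromRel (fun x y => ((c.2.1 x) ∩ (c.2.1 y)).Nonempty ∧ c.2.2 s(x, y) = true)

/-- A vertex is isolated if it has no neighbours. -/
def Isolated {n r P : ℕ} (c : Config n r P) (x : Fin n) : Prop := ∀ y, ¬ Adj c x y

/-- The graph has no isolated nodes. -/
def NoIsolatedNodes {n r P : ℕ} (c : Config n r P) : Prop := ∀ x, ¬ Isolated c x
section ProductWeights

open Finset Function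

lemma apply_update_of_dependsOn {ι β : Type*} [DecidableEq ι] {A : ι → Type*}
    {F : (∀ i, A i) → β} {s : Set ι} (hF : DependsOn F s) {i : ι} (hi : i ∉ s) (u : ∀ i, A i)
    (a : A i) : F (update u i a) = F u :=
  hF fun j hj => update_of_ne (fun hji : j = i => hi (hji ▸ hj)) a u

variable {V : Type*} [Fintype V] [DecidableEq V] {A : V → Type*}

lemma prod_update_mul_apply {M : Type*} [CommMonoid M] (q : ∀ v, A v → M) (u : ∀ v, A v) (z : V)
    (a : A z) : (∏ v, q v (update u z a v)) * q z (u z) = (∏ v, q v (u v)) * q z a := by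
  have hrest : ∏ v ∈ {z}ᶜ, q v (update u z a v) = ∏ v ∈ {z}ᶜ, q v (u v) :=
    prod_congr rfl fun v hv => by rw [update_of_ne (by simpa using hv)]
  rw [Fintype.prod_eq_mul_prod_compl z, Fintype.prod_eq_mul_prod_compl z, hrest, update_self,
    mul_right_comm, mul_right_comm (q z (u z)), mul_comm (q z a)]

variable [∀ v, Fintype (A v)] {R : Type*} [CommSemiring R] {q : ∀ v, A v → R}

/-- Swapping the coordinate `u z` with an independent copy `a` preserves the product weight. -/
lemma sum_prod_mul_eq_sum_update {z : V} (hq : ∑ a, q z a = 1) (F : (∀ v, A v) → R) :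
    ∑ u : ∀ v, A v, (∏ v, q v (u v)) * F u =
      ∑ u : ∀ v, A v, (∏ v, q v (u v)) * ∑ a, q z a * F (update u z a) := by
  let swap : (∀ v, A v) × A z → (∀ v, A v) × A z := fun p => (update p.1 z p.2, p.1 z)
  have hswap : Involutive swap := fun p => by simp [swap]
  calc ∑ u : ∀ v, A v, (∏ v, q v (u v)) * F u
      = ∑ p : (∀ v, A v) × A z, (∏ v, q v (p.1 v)) * q z p.2 * F p.1 := by
        simp only [Fintype.sum_prod_type, ← sum_mul, ← mul_sum, hq, mul_one]
    _ = ∑ p : (∀ v, A v) × A z,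
          (∏ v, q v (update p.1 z p.2 v)) * q z (p.1 z) * F (update p.1 z p.2) :=
        (Equiv.sum_comp hswap.toPerm _).symm
    _ = ∑ u : ∀ v, A v, (∏ v, q v (u v)) * ∑ a, q z a * F (update u z a) := by
        simp only [prod_update_mul_apply, Fintype.sum_prod_type, mul_sum, mul_assoc]

lemma sum_prod_mul_prod_of_dependsOn (D : Finset V) (hq : ∀ z ∈ D, ∑ a, q z a = 1)
    {F : (∀ v, A v) → R} (hF : DependsOn F (D : Set V)ᶜ)
    {ψ : ∀ z, (∀ v, A v) → A z → R} (hψ : ∀ z ∈ D, DependsOn (ψ z) (D : Set V)ᶜ) :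
    ∑ u : ∀ v, A v, (∏ v, q v (u v)) * (F u * ∏ z ∈ D, ψ z u (u z)) =
      ∑ u : ∀ v, A v, (∏ v, q v (u v)) * (F u * ∏ z ∈ D, ∑ a, q z a * ψ z u a) := by
  induction D using Finset.induction_on generalizing F with
  | empty => simp
  | insert z D hz ih =>
    have hsub : ((insert z D : Finset V) : Set V)ᶜ ⊆ (D : Set V)ᶜ :=
      Set.compl_subset_compl.2 (coe_subset.2 (subset_insert z D))
    have hz_notMem : z ∉ ((insert z D : Finset V) : Set V)ᶜ := by simp
    have hψz := hψ z (mem_insert_self z D)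
    have hψD (w : V) (hw : w ∈ D) := hψ w (mem_insert_of_mem hw)
    have hrest (u : ∀ v, A v) (a : A z) :
        ∏ w ∈ D, ψ w (update u z a) (update u z a w) = ∏ w ∈ D, ψ w u (u w) :=
      prod_congr rfl fun w hw => by
        rw [apply_update_of_dependsOn (hψD w hw) hz_notMem,
          update_of_ne (ne_of_mem_of_not_mem hw hz)]
    have hF' : DependsOn (fun u => F u * ∑ a, q z a * ψ z u a) (D : Set V)ᶜ := fun u u' h => by
      simp only [hF fun v hv => h v (hsub hv), hψz fun v hv => h v (hsub hv)]
    calc ∑ u : ∀ v, A v, (∏ v, q v (u v)) * (F u * ∏ w ∈ insert z D, ψ w u (u w))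
        = ∑ u : ∀ v, A v, (∏ v, q v (u v)) *
            ((F u * ∑ a, q z a * ψ z u a) * ∏ w ∈ D, ψ w u (u w)) := by
          rw [sum_prod_mul_eq_sum_update (hq z (mem_insert_self z D))]
          refine sum_congr rfl fun u _ => congrArg _ ?_
          simp only [prod_insert hz, hrest, apply_update_of_dependsOn hF hz_notMem,
            apply_update_of_dependsOn hψz hz_notMem, update_self, mul_sum, sum_mul]
          exact sum_congr rfl fun a _ => by ring
      _ = ∑ u : ∀ v, A v, (∏ v, q v (u v)) * (F u * ∏ w ∈ insert z D, ∑ a, q w a * ψ w u a) := by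
          rw [ih (fun w hw => hq w (mem_insert_of_mem hw)) hF' fun w hw => (hψD w hw).mono hsub]
          simp only [prod_insert hz, mul_assoc]

variable (hq : ∀ v, ∑ a, q v a = 1)
include hq

lemma sum_prod_eq_one : ∑ u : ∀ v, A v, ∏ v, q v (u v) = 1 := by
  simp only [← Fintype.prod_sum, hq, prod_const_one]

lemma sum_prod_mul_apply (x : V) (f : A x → R) :
    ∑ u : ∀ v, A v, (∏ v, q v (u v)) * f (u x) = ∑ a, q x a * f a := by
  rw [sum_prod_mul_eq_sum_update (hq x)]
  simp only [update_self, ← sum_mul, sum_prod_eq_one hq, one_mul]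

lemma sum_prod_mul_apply₂ {x y : V} (hxy : x ≠ y) (f : A x → A y → R) :
    ∑ u : ∀ v, A v, (∏ v, q v (u v)) * f (u x) (u y) =
      ∑ a, q x a * ∑ b, q y b * f a b := by
  rw [sum_prod_mul_eq_sum_update (hq y)]
  simp only [update_self, update_of_ne hxy]
  exact sum_prod_mul_apply hq x fun a => ∑ b, q y b * f a b

end ProductWeights

section SecondMoment

open Finset

variable {Ω : Type*} [Fintype Ω] {w : Ω → ℝ} (hw : ∀ ω, 0 ≤ w ω) (hw_sum : ∑ ω, w ω = 1)
include hw hw_sum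

lemma sq_mean_mul_sum_indicator_eq_zero_le (N : Ω → ℝ) :
    (∑ ω, w ω * N ω) ^ 2 * ∑ ω, {ω | N ω = 0}.indicator w ω ≤
      ∑ ω, w ω * N ω ^ 2 - (∑ ω, w ω * N ω) ^ 2 := by
  set m := ∑ ω, w ω * N ω with hm
  have hvariance : ∑ ω, w ω * (N ω - m) ^ 2 = ∑ ω, w ω * N ω ^ 2 - m ^ 2 := by
    calc ∑ ω, w ω * (N ω - m) ^ 2
        = ∑ ω, (w ω * N ω ^ 2 - 2 * m * (w ω * N ω) + w ω * m ^ 2) :=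
          sum_congr rfl fun ω _ => by ring
      _ = ∑ ω, w ω * N ω ^ 2 - m ^ 2 := by
          rw [sum_add_distrib, sum_sub_distrib, ← mul_sum, ← sum_mul, ← hm, hw_sum]; ring
  rw [← hvariance, mul_sum]
  refine sum_le_sum fun ω _ => ?_
  by_cases hN : N ω = 0
  · simp [hN, mul_comm]
  · simpa [hN] using mul_nonneg (hw ω) (sq_nonneg (N ω - m))

lemma sum_indicator_compl_iUnion_le {ι : Type*} [Fintype ι] [Nonempty ι] (A : ι → Set Ω)
    {m₁ m₂ : ℝ} (hm₁ : 0 < m₁) (hA : ∀ x, ∑ ω, (A x).indicator w ω = m₁)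
    (hm₂ : 0 ≤ m₂) (hA₂ : ∀ x y, x ≠ y → ∑ ω, (A x ∩ A y).indicator w ω ≤ m₂) :
    ∑ ω, (⋃ x, A x)ᶜ.indicator w ω ≤ (Fintype.card ι * m₁)⁻¹ + m₂ / m₁ ^ 2 - 1 := by
  classical
  set n : ℝ := (Fintype.card ι : ℝ) with hn
  have hn_pos : 0 < n := Nat.cast_pos.2 Fintype.card_pos
  let N : Ω → ℝ := fun ω => ∑ x, (A x).indicator 1 ω
  have hN_zero : {ω | N ω = 0} = (⋃ x, A x)ᶜ := by
    ext ω
    simp [N, Set.indicator_apply]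
  have hmul (s : Set Ω) (ω : Ω) : w ω * s.indicator 1 ω = s.indicator w ω := by
    simp [Set.indicator_apply]
  have hmean : ∑ ω, w ω * N ω = n * m₁ := by
    simp only [N, mul_sum, hmul]
    rw [sum_comm]
    simp [hA, hn]
  have hsq_mean : ∑ ω, w ω * N ω ^ 2 ≤ n * m₁ + n ^ 2 * m₂ := by
    calc ∑ ω, w ω * N ω ^ 2
        = ∑ ω, ∑ y, ∑ x, (A x ∩ A y).indicator w ω := by
          simp only [N, sq, sum_mul, mul_sum, ← hmul, Set.inter_indicator_one, Pi.mul_apply]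
      _ = ∑ y, ∑ x, ∑ ω, (A x ∩ A y).indicator w ω := by
          rw [sum_comm]
          exact sum_congr rfl fun y _ => sum_comm
      _ ≤ ∑ y, ∑ x, ((if x = y then m₁ else 0) + m₂) := by
          refine sum_le_sum fun y _ => sum_le_sum fun x _ => ?_
          split_ifs with hxy
          · simpa [hxy, hA] using hm₂
          · simpa using hA₂ x y hxy
      _ = n * m₁ + n ^ 2 * m₂ := by
          simp [sum_add_distrib, ← hn]; ring
  have hsecond := sq_mean_mul_sum_indicator_eq_zero_le hw hw_sum N
  rw [hN_zero, hmean] at hsecond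
  calc ∑ ω, (⋃ x, A x)ᶜ.indicator w ω
      ≤ (n * m₁ + n ^ 2 * m₂ - (n * m₁) ^ 2) / (n * m₁) ^ 2 := by
        rw [le_div_iff₀' (by positivity)]; linarith
    _ = (n * m₁)⁻¹ + m₂ / m₁ ^ 2 - 1 := by field_simp

end SecondMoment

section DescFactorial

lemma descFactorial_mul_le_mul_descFactorial (P a b k : ℕ) :
    (P - (a + b)).descFactorial k * P.descFactorial k ≤
      (P - a).descFactorial k * (P - b).descFactorial k := by
  induction k with
  | zero => simp
  | succ k ih =>
    have hfactor : (P - (a + b) - k) * (P - k) ≤ (P - a - k) * (P - b - k) := by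
      rcases le_total P (a + b + k) with h | h
      · simp [Nat.sub_sub, Nat.sub_eq_zero_of_le h]
      · obtain ⟨m, rfl⟩ := Nat.exists_eq_add_of_le h
        rw [show a + b + k + m - (a + b) - k = m by omega,
          show a + b + k + m - k = a + b + m by omega,
          show a + b + k + m - a - k = b + m by omega, show a + b + k + m - b - k = a + m by omega]
        nlinarith [Nat.zero_le (a * b)]
    simp only [Nat.descFactorial_succ]
    calc (P - (a + b) - k) * (P - (a + b)).descFactorial k * ((P - k) * P.descFactorial k)
        = (P - (a + b) - k) * (P - k) * ((P - (a + b)).descFactorial k * P.descFactorial k) := by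
          ring
      _ ≤ (P - a - k) * (P - b - k) * ((P - a).descFactorial k * (P - b).descFactorial k) :=
          Nat.mul_le_mul hfactor ih
      _ = (P - a - k) * (P - a).descFactorial k * ((P - b - k) * (P - b).descFactorial k) := by
          ring

lemma avoidProb_eq_descFactorial_div (P a k : ℕ) :
    avoidProb P a k = (P - a).descFactorial k / P.descFactorial k := by
  simp only [avoidProb, Nat.descFactorial_eq_factorial_mul_choose, Nat.cast_mul]
  rw [mul_div_mul_left _ _ (by positivity)]

lemma avoidProb_add_le {P k : ℕ} (hk : k ≤ P) (a b : ℕ) :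
    avoidProb P (a + b) k ≤ avoidProb P a k * avoidProb P b k := by
  have hpos : (0 : ℝ) < P.descFactorial k := by exact_mod_cast Nat.descFactorial_pos.2 hk
  simp only [avoidProb_eq_descFactorial_div]
  rw [div_mul_div_comm, ← mul_div_mul_right _ _ hpos.ne']
  refine div_le_div_of_nonneg_right ?_ (by positivity)
  exact_mod_cast descFactorial_mul_le_mul_descFactorial P a b k

end DescFactorial

section KeyRings

open Finset
open scoped BigOperators

variable {P k : ℕ}

/-- Indicator of the event that two key rings share a key. -/
noncomputable def hit (S T : Finset (Fin P)) : ℝ := if Disjoint S T then 0 else 1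

lemma hit_nonneg (S T : Finset (Fin P)) : 0 ≤ hit S T := by unfold hit; split_ifs <;> simp

lemma hit_le_one (S T : Finset (Fin P)) : hit S T ≤ 1 := by unfold hit; split_ifs <;> simp

lemma expect_one_sub_hit (S : Finset (Fin P)) (k : ℕ) :
    𝔼 T ∈ powersetCard k univ, (1 - hit S T) = avoidProb P #S k := by
  have hdisj : {T ∈ powersetCard k (univ : Finset (Fin P)) | Disjoint S T} = powersetCard k Sᶜ := by
    ext T
    simp [mem_powersetCard, subset_compl_iff_disjoint_left, and_comm]
  have hite (T : Finset (Fin P)) : 1 - hit S T = if Disjoint S T then 1 else 0 := by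
    by_cases h : Disjoint S T <;> simp [hit, h]
  simp [expect_eq_sum_div_card, hite, hdisj, avoidProb, card_compl]

lemma pEdge_nonneg (P a k : ℕ) : 0 ≤ pEdge P a k := by
  refine sub_nonneg.2 (div_le_one_of_le₀ ?_ (Nat.cast_nonneg _))
  exact_mod_cast Nat.choose_le_choose k (Nat.sub_le P a)

lemma pEdge_le_one (P a k : ℕ) : pEdge P a k ≤ 1 :=
  sub_le_self _ (div_nonneg (Nat.cast_nonneg _) (Nat.cast_nonneg _))

variable (hk : k ≤ P)
include hk

lemma powersetCard_univ_nonempty : (powersetCard k (univ : Finset (Fin P))).Nonempty :=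
  powersetCard_nonempty.2 (by simpa using hk)

lemma expect_hit (S : Finset (Fin P)) : 𝔼 T ∈ powersetCard k univ, hit S T = pEdge P #S k := by
  rw [pEdge, ← expect_one_sub_hit, expect_sub_distrib,
    expect_const (powersetCard_univ_nonempty hk), sub_sub_cancel]

lemma expect_hit_mul_hit_le {S T : Finset (Fin P)} (hST : Disjoint S T) :
    𝔼 R ∈ powersetCard k univ, hit S R * hit T R ≤ pEdge P #S k * pEdge P #T k := by
  have hunion (R : Finset (Fin P)) : hit S R * hit T R = hit S R + hit T R - hit (S ∪ T) R := by
    by_cases hS : Disjoint S R <;> by_cases hT : Disjoint T R <;>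
      simp [hit, disjoint_union_left, hS, hT]
  have havoid := avoidProb_add_le hk #S #T
  simp only [hunion, expect_add_distrib, expect_sub_distrib, expect_hit hk,
    card_union_of_disjoint hST, pEdge]
  linarith

end KeyRings

section NodeLaw

open Finset
open scoped BigOperators

variable {r P : ℕ} {μ : Fin (r + 1) → ℝ} {K : Fin (r + 1) → ℕ} {α : ℝ} {i : Fin (r + 1)}
  {S T : Finset (Fin P)}

/-- Joint law of the class and the key ring of a single vertex. -/
noncomputable def nodeWt (μ : Fin (r + 1) → ℝ) (K : Fin (r + 1) → ℕ)
    (a : Fin (r + 1) × Finset (Fin P)) : ℝ :=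
  μ a.1 * if #a.2 = K a.1 then (P.choose (K a.1) : ℝ)⁻¹ else 0

lemma sum_nodeWt_mul (μ : Fin (r + 1) → ℝ) (K : Fin (r + 1) → ℕ)
    (f : Fin (r + 1) × Finset (Fin P) → ℝ) :
    ∑ a, nodeWt μ K a * f a = ∑ j, μ j * 𝔼 S ∈ powersetCard (K j) univ, f (j, S) := by
  rw [Fintype.sum_prod_type]
  refine sum_congr rfl fun j _ => ?_
  simp only [expect_eq_sum_div_card, ← univ_filter_card_eq, sum_filter]
  simp [nodeWt, mul_sum, div_eq_inv_mul, mul_assoc, apply_ite]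

lemma sum_nodeWt_mul_ite_class (f : Finset (Fin P) → ℝ) :
    ∑ a, nodeWt μ K a * ((if a.1 = i then 1 else 0) * f a.2) =
      μ i * 𝔼 S ∈ powersetCard (K i) univ, f S := by
  rw [sum_nodeWt_mul, Fintype.sum_eq_single i fun j hj => by simp [hj]]
  simp

lemma nodeWt_nonneg (hμ : ∀ j, 0 ≤ μ j) (a : Fin (r + 1) × Finset (Fin P)) :
    0 ≤ nodeWt μ K a :=
  mul_nonneg (hμ a.1) (by split_ifs <;> positivity)

lemma lamb_nonneg (hμ : ∀ j, 0 ≤ μ j) : 0 ≤ lamb μ K P i :=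
  sum_nonneg fun j _ => mul_nonneg (hμ j) (pEdge_nonneg P _ _)

lemma mul_pEdge_le_lamb (hμ : ∀ j, 0 ≤ μ j) (j : Fin (r + 1)) :
    μ j * pEdge P (K i) (K j) ≤ lamb μ K P i :=
  single_le_sum (f := fun j => μ j * pEdge P (K i) (K j))
    (fun j _ => mul_nonneg (hμ j) (pEdge_nonneg P _ _)) (mem_univ j)

section Sums

variable (hK : ∀ j, K j ≤ P) (hS : #S = K i)
include hK

lemma sum_nodeWt (hμ_sum : ∑ j, μ j = 1) :
    ∑ a : Fin (r + 1) × Finset (Fin P), nodeWt μ K a = 1 := by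
  simpa [expect_const (powersetCard_univ_nonempty (hK _)), hμ_sum]
    using sum_nodeWt_mul (P := P) μ K fun _ => 1

include hS

lemma sum_nodeWt_mul_hit : ∑ a, nodeWt μ K a * hit S a.2 = lamb μ K P i := by
  simp [sum_nodeWt_mul, expect_hit (hK _), hS, lamb]

lemma sum_nodeWt_mul_hit_mul_hit_le_lamb (hμ : ∀ j, 0 ≤ μ j) :
    ∑ a, nodeWt μ K a * (hit S a.2 * hit T a.2) ≤ lamb μ K P i := by
  rw [← sum_nodeWt_mul_hit hK hS]
  gcongr with a
  · exact nodeWt_nonneg hμ a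
  · exact mul_le_of_le_one_right (hit_nonneg S a.2) (hit_le_one T a.2)

lemma sum_nodeWt_mul_hit_mul_hit_le_sq (hμ : ∀ j, 0 ≤ μ j) (hT : #T = K i)
    (hST : Disjoint S T) :
    ∑ a, nodeWt μ K a * (hit S a.2 * hit T a.2) ≤ (∑ j, (μ j)⁻¹) * lamb μ K P i ^ 2 := by
  rw [sum_nodeWt_mul, sum_mul]
  refine sum_le_sum fun j _ => ?_
  calc μ j * 𝔼 R ∈ powersetCard (K j) univ, hit S R * hit T R
      ≤ μ j * (pEdge P (K i) (K j) * pEdge P (K i) (K j)) := by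
        have hexpect := expect_hit_mul_hit_le (hK j) hST
        rw [hS, hT] at hexpect
        exact mul_le_mul_of_nonneg_left hexpect (hμ j)
    _ = (μ j)⁻¹ * (μ j * pEdge P (K i) (K j)) ^ 2 := by
        rcases (hμ j).eq_or_lt with h | h
        · simp [← h]
        · field_simp
    _ ≤ (μ j)⁻¹ * lamb μ K P i ^ 2 := by
        gcongr
        · exact inv_nonneg.2 (hμ j)
        · exact mul_nonneg (hμ j) (pEdge_nonneg P _ _)
        · exact mul_pEdge_le_lamb hμ j

lemma sum_nodeWt_mul_miss (hμ_sum : ∑ j, μ j = 1) :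
    ∑ a, nodeWt μ K a * (1 - α * hit S a.2) = 1 - α * lamb μ K P i := by
  simp only [mul_sub, mul_one, sum_sub_distrib, sum_nodeWt hK hμ_sum, mul_left_comm _ α, ← mul_sum,
    sum_nodeWt_mul_hit hK hS]

lemma sum_nodeWt_mul_miss_mul_miss (hμ_sum : ∑ j, μ j = 1) (hT : #T = K i) :
    ∑ a, nodeWt μ K a * ((1 - α * hit S a.2) * (1 - α * hit T a.2)) =
      1 - 2 * (α * lamb μ K P i) +
        α ^ 2 * ∑ a, nodeWt μ K a * (hit S a.2 * hit T a.2) := by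
  calc _ = ∑ a, (nodeWt μ K a * (1 - α * hit S a.2) - α * (nodeWt μ K a * hit T a.2) +
          α ^ 2 * (nodeWt μ K a * (hit S a.2 * hit T a.2))) :=
        sum_congr rfl fun a _ => by ring
    _ = _ := by
        rw [sum_add_distrib, sum_sub_distrib, ← mul_sum, ← mul_sum,
          sum_nodeWt_mul_miss hK hS hμ_sum, sum_nodeWt_mul_hit hK hT]
        ring

end Sums

end NodeLaw

section Model

open Finset

variable {n r P : ℕ} {μ : Fin (r + 1) → ℝ} {K : Fin (r + 1) → ℕ} {α : ℝ}

/-- Law of the state of a single channel; as in `wt`, diagonal channels are always off. -/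
noncomputable def channelWt (α : ℝ) (e : Sym2 (Fin n)) (b : Bool) : ℝ :=
  if e.IsDiag then (if b then 0 else 1) else (if b then α else 1 - α)

/-- The configuration with prescribed classes and key rings `u` and channel states `b`. -/
def configOf (u : Fin n → Fin (r + 1) × Finset (Fin P)) (b : Sym2 (Fin n) → Bool) :
    Config n r P :=
  (fun v => (u v).1, fun v => (u v).2, b)

/-- No edge joins `R` to its complement. -/
def Separated (c : Config n r P) (R : Finset (Fin n)) : Prop := ∀ v ∈ R, ∀ z ∉ R, ¬ Adj c v z

/-- The channels joining `R` to its complement whose endpoints share a key; these are the channels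
that have to be off for `R` to be separated. -/
def crossingChannels (κ : Fin n → Finset (Fin P)) (R : Finset (Fin n)) : Finset (Sym2 (Fin n)) :=
  {p ∈ R ×ˢ Rᶜ | ¬ Disjoint (κ p.1) (κ p.2)}.image fun p => s(p.1, p.2)

lemma sum_wt_mul (H : Config n r P → ℝ) :
    ∑ c, wt μ K α c * H c = ∑ u : Fin n → Fin (r + 1) × Finset (Fin P), (∏ v, nodeWt μ K (u v)) *
      ∑ b, (∏ e, channelWt α e (b e)) * H (configOf u b) := by
  rw [← ((Equiv.arrowProdEquivProdArrow (Fin n) _ _).prodCongr (Equiv.refl _)|>.trans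
    (Equiv.prodAssoc _ _ _)).sum_comp, Fintype.sum_prod_type]
  simp only [mul_sum, ← mul_assoc]
  refine sum_congr rfl fun u _ => sum_congr rfl fun b _ => ?_
  simp only [wt, nodeWt, channelWt, prod_mul_distrib]
  rfl

lemma sum_channelWt (e : Sym2 (Fin n)) : ∑ b, channelWt α e b = 1 := by
  by_cases he : e.IsDiag <;> simp [channelWt, he]

lemma sum_channelWt_mul_ite_off (T : Finset (Sym2 (Fin n))) (hT : ∀ e ∈ T, ¬ e.IsDiag) :
    ∑ b : Sym2 (Fin n) → Bool, (∏ e, channelWt α e (b e)) *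
      (if ∀ e ∈ T, b e = false then 1 else 0) = (1 - α) ^ #T := by
  have hoff (e : Sym2 (Fin n)) (he : e ∈ T) :
      ∑ β, channelWt α e β * (if β = false then 1 else 0) = 1 - α := by
    simp [channelWt, hT e he]
  calc _ = ∑ b : Sym2 (Fin n) → Bool, (∏ e, channelWt α e (b e)) *
        (1 * ∏ e ∈ T, if b e = false then 1 else 0) := by
        simp only [prod_ite_zero, prod_const_one, one_mul]
    _ = ∑ b : Sym2 (Fin n) → Bool, (∏ e, channelWt α e (b e)) * (1 * ∏ e ∈ T, (1 - α)) := by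
        rw [sum_prod_mul_prod_of_dependsOn T (fun e _ => sum_channelWt e)
          (F := fun _ => 1) (ψ := fun _ _ β => if β = false then 1 else 0)
          (fun _ _ _ => rfl) (fun _ _ _ _ _ => rfl)]
        simp only [prod_congr rfl hoff]
    _ = (1 - α) ^ #T := by
        rw [← sum_mul, sum_prod_eq_one sum_channelWt, one_mul, one_mul, prod_const]

lemma not_isDiag_of_mem_crossingChannels {κ : Fin n → Finset (Fin P)} {R : Finset (Fin n)}
    {e : Sym2 (Fin n)} (he : e ∈ crossingChannels κ R) : ¬ e.IsDiag := by
  obtain ⟨p, hp, rfl⟩ := mem_image.1 he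
  simp only [mem_filter, mem_product, mem_compl] at hp
  exact fun h => hp.1.2 (Sym2.mk_isDiag_iff.1 h ▸ hp.1.1)

lemma separated_configOf_iff {u : Fin n → Fin (r + 1) × Finset (Fin P)}
    {b : Sym2 (Fin n) → Bool} {R : Finset (Fin n)} :
    Separated (configOf u b) R ↔ ∀ e ∈ crossingChannels (fun v => (u v).2) R, b e = false := by
  simp only [crossingChannels, forall_mem_image, mem_filter, mem_product, mem_compl, Prod.forall,
    Separated, Adj, configOf, not_and, Bool.not_eq_true, ← not_disjoint_iff_nonempty_inter]
  exact ⟨fun h v z hvz => h v hvz.1.1 z hvz.1.2 (ne_of_mem_of_not_mem hvz.1.1 hvz.1.2) hvz.2,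
    fun h v hv z hz _ hvz => h v z ⟨⟨hv, hz⟩, hvz⟩⟩

lemma pow_card_crossingChannels (α : ℝ) (κ : Fin n → Finset (Fin P)) (R : Finset (Fin n)) :
    (1 - α) ^ #(crossingChannels κ R) = ∏ z ∈ Rᶜ, ∏ v ∈ R, (1 - α * hit (κ v) (κ z)) := by
  have hinj : Set.InjOn (fun p : Fin n × Fin n => s(p.1, p.2)) (R ×ˢ Rᶜ : Finset _) := by
    rintro ⟨v, z⟩ hvz ⟨v', z'⟩ hvz' h
    simp only [coe_product, Set.mem_prod, mem_coe, mem_compl] at hvz hvz'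
    rcases Sym2.eq_iff.1 h with ⟨rfl, rfl⟩ | ⟨rfl, rfl⟩
    · rfl
    · exact absurd hvz.1 hvz'.2
  rw [crossingChannels, card_image_of_injOn (hinj.mono fun p hp => (mem_filter.1 hp).1),
    ← prod_const, prod_filter, prod_product_right]
  exact prod_congr rfl fun z _ => prod_congr rfl fun v _ => by
    by_cases h : Disjoint (κ v) (κ z) <;> simp [hit, h]

end Model

section Cut

open Finset
open scoped BigOperators

variable {n r P : ℕ} {μ : Fin (r + 1) → ℝ} {K : Fin (r + 1) → ℕ} {α : ℝ} {i : Fin (r + 1)}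

lemma sum_wt (hK : ∀ j, K j ≤ P) (hμ_sum : ∑ j, μ j = 1) :
    ∑ c : Config n r P, wt μ K α c = 1 := by
  simpa [sum_prod_eq_one fun _ => sum_nodeWt hK hμ_sum, sum_prod_eq_one sum_channelWt]
    using sum_wt_mul (n := n) (P := P) (μ := μ) (K := K) (α := α) fun _ => 1

lemma pr_eq_sum_indicator (E : Config n r P → Prop) :
    pr μ K α E = ∑ c, {c | E c}.indicator (wt μ K α) c :=
  rfl

open Classical in
lemma sum_channelWt_mul_ite_separated (u : Fin n → Fin (r + 1) × Finset (Fin P))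
    (R : Finset (Fin n)) :
    ∑ b : Sym2 (Fin n) → Bool, (∏ e, channelWt α e (b e)) *
      (if Separated (configOf u b) R then 1 else 0) =
        ∏ z ∈ Rᶜ, ∏ v ∈ R, (1 - α * hit (u v).2 (u z).2) := by
  rw [← pow_card_crossingChannels α fun v => (u v).2,
    ← sum_channelWt_mul_ite_off _ fun e he => not_isDiag_of_mem_crossingChannels he]
  exact sum_congr rfl fun b _ => congrArg _ (if_congr separated_configOf_iff rfl rfl)

lemma pr_separated_eq_sum_prod (hK : ∀ j, K j ≤ P) (hμ_sum : ∑ j, μ j = 1) (R : Finset (Fin n)) :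
    pr μ K α (fun c : Config n r P => (∀ v ∈ R, c.1 v = i) ∧ Separated c R) =
      ∑ u : Fin n → Fin (r + 1) × Finset (Fin P), (∏ v, nodeWt μ K (u v)) *
        ((if ∀ v ∈ R, (u v).1 = i then 1 else 0) *
          (∑ a, nodeWt μ K a * ∏ v ∈ R, (1 - α * hit (u v).2 a.2)) ^ (n - #R)) := by
  classical
  have hR (v : Fin n) (hv : v ∈ R) : v ∈ ((Rᶜ : Finset (Fin n)) : Set (Fin n))ᶜ := by simpa using hv
  calc pr μ K α (fun c : Config n r P => (∀ v ∈ R, c.1 v = i) ∧ Separated c R)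
      = ∑ c : Config n r P, wt μ K α c * ((if ∀ v ∈ R, c.1 v = i then 1 else 0) *
          (if Separated c R then 1 else 0)) := by
        refine sum_congr rfl fun c _ => ?_
        by_cases hclass : ∀ v ∈ R, c.1 v = i <;> by_cases hsep : Separated c R <;>
          simp only [hclass, hsep] <;> simp
    _ = ∑ u : Fin n → Fin (r + 1) × Finset (Fin P), (∏ v, nodeWt μ K (u v)) *
        ((if ∀ v ∈ R, (u v).1 = i then 1 else 0) *
          ∏ z ∈ Rᶜ, ∏ v ∈ R, (1 - α * hit (u v).2 (u z).2)) := by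
        rw [sum_wt_mul]
        refine sum_congr rfl fun u _ => congrArg _ ?_
        rw [← sum_channelWt_mul_ite_separated, mul_sum]
        exact sum_congr rfl fun b _ => mul_left_comm _ _ _
    _ = ∑ u : Fin n → Fin (r + 1) × Finset (Fin P), (∏ v, nodeWt μ K (u v)) *
        ((if ∀ v ∈ R, (u v).1 = i then 1 else 0) *
          ∏ _z ∈ Rᶜ, ∑ a, nodeWt μ K a * ∏ v ∈ R, (1 - α * hit (u v).2 a.2)) :=
        sum_prod_mul_prod_of_dependsOn Rᶜ (fun z _ => sum_nodeWt hK hμ_sum)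
          (F := fun u => if ∀ v ∈ R, (u v).1 = i then 1 else 0)
          (fun u u' h =>
            if_congr (forall₂_congr fun v hv => by rw [h v (hR v hv)]) rfl rfl)
          (ψ := fun _ u a => ∏ v ∈ R, (1 - α * hit (u v).2 a.2))
          fun _ _ u u' h => funext fun a => prod_congr rfl fun v hv => by rw [h v (hR v hv)]
    _ = _ := by simp only [prod_const, card_compl, Fintype.card_fin]

end Cut

section Moments

open Finset
open scoped BigOperators

variable {n r P : ℕ} {μ : Fin (r + 1) → ℝ} {K : Fin (r + 1) → ℕ} {α : ℝ} {i : Fin (r + 1)}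

lemma isolated_iff_separated_singleton {c : Config n r P} {x : Fin n} :
    Isolated c x ↔ Separated c {x} := by
  simp only [Isolated, Separated, mem_singleton, forall_eq]
  exact ⟨fun h z _ => h z, fun h z hz => h z hz.1.symm hz⟩

lemma separated_pair_of_isolated {c : Config n r P} {x y : Fin n} (hx : Isolated c x)
    (hy : Isolated c y) : Separated c {x, y} := by
  simp only [Separated, mem_insert, mem_singleton, forall_eq_or_imp, forall_eq]
  exact ⟨fun z _ => hx z, fun z _ => hy z⟩

lemma wt_nonneg (hμ : ∀ j, 0 ≤ μ j) (hα : α ∈ Set.Icc 0 1) (c : Config n r P) :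
    0 ≤ wt μ K α c := by
  have hα' := sub_nonneg.2 hα.2
  refine mul_nonneg (mul_nonneg (prod_nonneg fun x _ => hμ _) (prod_nonneg fun x _ => ?_))
    (prod_nonneg fun e _ => ?_) <;> split_ifs <;> first | positivity | exact hα.1

lemma pr_nonneg (hμ : ∀ j, 0 ≤ μ j) (hα : α ∈ Set.Icc 0 1) (E : Config n r P → Prop) :
    0 ≤ pr μ K α E :=
  sum_nonneg fun c _ => Set.indicator_nonneg (s := {c | E c}) (fun c _ => wt_nonneg hμ hα c) c

lemma pr_mono (hμ : ∀ j, 0 ≤ μ j) (hα : α ∈ Set.Icc 0 1) {E E' : Config n r P → Prop}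
    (h : ∀ c, E c → E' c) : pr μ K α E ≤ pr μ K α E' :=
  sum_le_sum fun c _ => Set.indicator_le_indicator_of_subset (s := {c | E c}) h
    (wt_nonneg hμ hα) c

lemma pr_isolated (hK : ∀ j, K j ≤ P) (hμ_sum : ∑ j, μ j = 1) (x : Fin n) :
    pr μ K α (fun c : Config n r P => c.1 x = i ∧ Isolated c x) =
      μ i * (1 - α * lamb μ K P i) ^ (n - 1) := by
  calc pr μ K α (fun c : Config n r P => c.1 x = i ∧ Isolated c x)
      = ∑ u : Fin n → Fin (r + 1) × Finset (Fin P), (∏ v, nodeWt μ K (u v)) *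
          ((if (u x).1 = i then 1 else 0) *
            (∑ a, nodeWt μ K a * (1 - α * hit (u x).2 a.2)) ^ (n - 1)) := by
        simpa [isolated_iff_separated_singleton] using
          pr_separated_eq_sum_prod (α := α) (i := i) hK hμ_sum {x}
    _ = μ i * 𝔼 S ∈ powersetCard (K i) univ,
          (∑ a, nodeWt μ K a * (1 - α * hit S a.2)) ^ (n - 1) := by
        rw [sum_prod_mul_apply (fun _ => sum_nodeWt hK hμ_sum) x fun a =>
          (if a.1 = i then 1 else 0) * (∑ b, nodeWt μ K b * (1 - α * hit a.2 b.2)) ^ (n - 1)]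
        exact sum_nodeWt_mul_ite_class fun S =>
          (∑ b, nodeWt μ K b * (1 - α * hit S b.2)) ^ (n - 1)
    _ = μ i * (1 - α * lamb μ K P i) ^ (n - 1) := by
        rw [expect_congr rfl fun S hS =>
            by rw [sum_nodeWt_mul_miss hK (mem_powersetCard.1 hS).2 hμ_sum],
          expect_const (powersetCard_univ_nonempty (hK i))]

lemma pr_separated_pair (hK : ∀ j, K j ≤ P) (hμ_sum : ∑ j, μ j = 1) {x y : Fin n} (hxy : x ≠ y) :
    pr μ K α (fun c : Config n r P => (∀ v ∈ ({x, y} : Finset (Fin n)), c.1 v = i) ∧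
      Separated c {x, y}) =
        μ i ^ 2 * 𝔼 S ∈ powersetCard (K i) (univ : Finset (Fin P)), 𝔼 T ∈ powersetCard (K i) univ,
          (∑ a, nodeWt μ K a * ((1 - α * hit S a.2) * (1 - α * hit T a.2))) ^ (n - 2) := by
  let f (S T : Finset (Fin P)) : ℝ :=
    (∑ a, nodeWt μ K a * ((1 - α * hit S a.2) * (1 - α * hit T a.2))) ^ (n - 2)
  rw [pr_separated_eq_sum_prod hK hμ_sum]
  calc _ = ∑ u : Fin n → Fin (r + 1) × Finset (Fin P), (∏ v, nodeWt μ K (u v)) *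
        ((if (u x).1 = i then 1 else 0) *
          ((if (u y).1 = i then 1 else 0) * f (u x).2 (u y).2)) := by
        refine sum_congr rfl fun u _ => congrArg _ ?_
        by_cases hx : (u x).1 = i <;> by_cases hy : (u y).1 = i <;>
          simp [hx, hy, f, prod_pair hxy, card_pair hxy]
    _ = ∑ a, nodeWt μ K a * ∑ b, nodeWt μ K b *
          ((if a.1 = i then 1 else 0) * ((if b.1 = i then 1 else 0) * f a.2 b.2)) :=
        sum_prod_mul_apply₂ (fun _ => sum_nodeWt hK hμ_sum) hxy fun a b =>
          (if a.1 = i then 1 else 0) * ((if b.1 = i then 1 else 0) * f a.2 b.2)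
    _ = ∑ a, nodeWt μ K a * ((if a.1 = i then 1 else 0) *
          (μ i * 𝔼 T ∈ powersetCard (K i) univ, f a.2 T)) := by
        refine sum_congr rfl fun a _ => congrArg _ ?_
        rw [← sum_nodeWt_mul_ite_class, mul_sum]
        exact sum_congr rfl fun b _ => mul_left_comm _ _ _
    _ = μ i ^ 2 * 𝔼 S ∈ powersetCard (K i) univ, 𝔼 T ∈ powersetCard (K i) univ, f S T := by
        rw [sum_nodeWt_mul_ite_class fun S => μ i * 𝔼 T ∈ powersetCard (K i) univ, f S T,
          ← mul_expect, ← mul_assoc, sq]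

lemma miss_mul_miss_pow_le (hK : ∀ j, K j ≤ P) (hμ : ∀ j, 0 ≤ μ j) (hμ_sum : ∑ j, μ j = 1)
    (hα : α ∈ Set.Icc 0 1) {S T : Finset (Fin P)} (hS : #S = K i) (hT : #T = K i) (m : ℕ) :
    (∑ a, nodeWt μ K a * ((1 - α * hit S a.2) * (1 - α * hit T a.2))) ^ m ≤
      (1 - hit S T) *
        (1 - 2 * (α * lamb μ K P i) + (∑ j, (μ j)⁻¹) * (α * lamb μ K P i) ^ 2) ^ m +
      hit S T * (1 - 2 * (α * lamb μ K P i) + α * (α * lamb μ K P i)) ^ m := by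
  have hmiss (R R' : Finset (Fin P)) : 0 ≤ 1 - α * hit R R' :=
    sub_nonneg.2 (mul_le_one₀ hα.2 (hit_nonneg R R') (hit_le_one R R'))
  have hbase : 0 ≤ ∑ a, nodeWt μ K a * ((1 - α * hit S a.2) * (1 - α * hit T a.2)) :=
    sum_nonneg fun a _ => mul_nonneg (nodeWt_nonneg hμ a) (mul_nonneg (hmiss S _) (hmiss T _))
  have hexpand := sum_nodeWt_mul_miss_mul_miss (α := α) hK hS hμ_sum hT
  by_cases hST : Disjoint S T
  · have hcorr := mul_le_mul_of_nonneg_left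
      (sum_nodeWt_mul_hit_mul_hit_le_sq hK hS hμ hT hST) (sq_nonneg α)
    rw [show hit S T = 0 by simp [hit, hST], sub_zero, one_mul, zero_mul, add_zero]
    gcongr
    linarith
  · have hcrude := mul_le_mul_of_nonneg_left
      (sum_nodeWt_mul_hit_mul_hit_le_lamb (T := T) hK hS hμ) (sq_nonneg α)
    rw [show hit S T = 1 by simp [hit, hST], sub_self, zero_mul, zero_add, one_mul]
    gcongr
    linarith

lemma pr_isolated_pair_le (hK : ∀ j, K j ≤ P) (hμ : ∀ j, 0 ≤ μ j) (hμ_sum : ∑ j, μ j = 1)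
    (hα : α ∈ Set.Icc 0 1) {x y : Fin n} (hxy : x ≠ y) :
    pr μ K α (fun c : Config n r P => (c.1 x = i ∧ Isolated c x) ∧ c.1 y = i ∧ Isolated c y) ≤
      μ i ^ 2 * ((1 - pEdge P (K i) (K i)) *
        (1 - 2 * (α * lamb μ K P i) + (∑ j, (μ j)⁻¹) * (α * lamb μ K P i) ^ 2) ^ (n - 2) +
      pEdge P (K i) (K i) * (1 - 2 * (α * lamb μ K P i) + α * (α * lamb μ K P i)) ^ (n - 2)) := by
  set X := (1 - 2 * (α * lamb μ K P i) + (∑ j, (μ j)⁻¹) * (α * lamb μ K P i) ^ 2) ^ (n - 2)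
  set Y := (1 - 2 * (α * lamb μ K P i) + α * (α * lamb μ K P i)) ^ (n - 2)
  have hrings := powersetCard_univ_nonempty (hK i)
  calc pr μ K α (fun c : Config n r P => (c.1 x = i ∧ Isolated c x) ∧ c.1 y = i ∧ Isolated c y)
      ≤ pr μ K α (fun c : Config n r P => (∀ v ∈ ({x, y} : Finset (Fin n)), c.1 v = i) ∧
          Separated c {x, y}) :=
        pr_mono hμ hα fun c ⟨⟨hx, hx'⟩, hy, hy'⟩ =>
          ⟨by simp [hx, hy], separated_pair_of_isolated hx' hy'⟩
    _ = μ i ^ 2 * 𝔼 S ∈ powersetCard (K i) (univ : Finset (Fin P)),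
          𝔼 T ∈ powersetCard (K i) univ,
            (∑ a, nodeWt μ K a * ((1 - α * hit S a.2) * (1 - α * hit T a.2))) ^ (n - 2) :=
        pr_separated_pair hK hμ_sum hxy
    _ ≤ μ i ^ 2 * 𝔼 S ∈ powersetCard (K i) (univ : Finset (Fin P)),
          𝔼 T ∈ powersetCard (K i) univ, ((1 - hit S T) * X + hit S T * Y) := by
        gcongr with S hS T hT
        exact miss_mul_miss_pow_le hK hμ hμ_sum hα (mem_powersetCard.1 hS).2
          (mem_powersetCard.1 hT).2 _
    _ = μ i ^ 2 * 𝔼 S ∈ powersetCard (K i) (univ : Finset (Fin P)),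
          ((1 - pEdge P #S (K i)) * X + pEdge P #S (K i) * Y) := by
        simp only [expect_add_distrib, ← expect_mul, expect_sub_distrib, expect_const hrings,
          expect_hit (hK i)]
    _ = μ i ^ 2 * ((1 - pEdge P (K i) (K i)) * X + pEdge P (K i) (K i) * Y) := by
        rw [expect_congr rfl fun S hS => by rw [(mem_powersetCard.1 hS).2], expect_const hrings]

end Moments

section RealEstimates

open Real

lemma exp_sub_one_le_mul_exp (x : ℝ) : exp x - 1 ≤ x * exp x := by
  have h := mul_le_mul_of_nonneg_right (one_sub_le_exp_neg x) (exp_pos x).le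
  rw [← exp_add, neg_add_cancel, exp_zero] at h
  linarith

lemma inv_one_sub_pow_le_exp {t : ℝ} (ht₀ : 0 ≤ t) (ht₁ : t < 1) (m : ℕ) :
    ((1 - t) ^ m)⁻¹ ≤ exp (m * (t / (1 - t) ^ 2)) := by
  have h₁ : 0 < 1 - t := sub_pos.2 ht₁
  have hbase : (1 - t)⁻¹ ≤ exp (t / (1 - t) ^ 2) :=
    calc (1 - t)⁻¹ = t / (1 - t) + 1 := by field_simp; ring
      _ ≤ t / (1 - t) ^ 2 + 1 := by
        gcongr
        exact pow_le_of_le_one h₁.le (by linarith) two_ne_zero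
      _ ≤ exp (t / (1 - t) ^ 2) := add_one_le_exp _
  rw [← inv_pow, exp_nat_mul]
  exact pow_le_pow_left₀ (inv_nonneg.2 h₁.le) hbase m

lemma one_sub_two_mul_add_pow_le {t s : ℝ} (ht : t ≤ 1 / 2) (hs : 0 ≤ s) (m : ℕ) :
    (1 - 2 * t + s) ^ m ≤ ((1 - t) ^ m) ^ 2 * exp (m * (s / (1 - t) ^ 2)) := by
  have h₁ : 0 < 1 - t := by linarith
  have hbase : 1 - 2 * t + s ≤ (1 - t) ^ 2 * exp (s / (1 - t) ^ 2) :=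
    calc 1 - 2 * t + s ≤ (1 - t) ^ 2 * (s / (1 - t) ^ 2 + 1) := by
          rw [mul_add, mul_div_cancel₀ _ (by positivity)]
          linarith [sq_nonneg t]
      _ ≤ (1 - t) ^ 2 * exp (s / (1 - t) ^ 2) := by gcongr; exact add_one_le_exp _
  rw [pow_right_comm, exp_nat_mul, ← mul_pow]
  exact pow_le_pow_left₀ (by linarith) hbase m

lemma tendsto_pow_mul_exp_div (k : ℕ) {s : ℕ → ℝ} {d : ℝ} (hd : d < 1) (hs₀ : ∀ n, 0 ≤ s n)
    (hs : ∀ᶠ n : ℕ in atTop, s n ≤ d * log n) :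
    Tendsto (fun n : ℕ => s n ^ k * exp (s n) / n) atTop (nhds 0) := by
  have h₁ : 0 < 1 - d := sub_pos.2 hd
  have hlog : Tendsto (fun n : ℕ => (1 - d) * log n) atTop atTop :=
    (tendsto_log_atTop.comp tendsto_natCast_atTop_atTop).const_mul_atTop h₁
  have hlim : Tendsto (fun n : ℕ => (d / (1 - d)) ^ k *
      (((1 - d) * log n) ^ k * exp (-((1 - d) * log n)))) atTop (nhds 0) := by
    simpa using ((tendsto_pow_mul_exp_neg_atTop_nhds_zero k).comp hlog).const_mul _
  refine squeeze_zero' (.of_forall fun n => by have := hs₀ n; positivity) ?_ hlim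
  filter_upwards [hs, eventually_gt_atTop 0] with n hn hn_pos
  have hexp : exp (d * log n) / n = exp (-((1 - d) * log n)) := by
    nth_rw 2 [← exp_log (Nat.cast_pos.2 hn_pos : (0 : ℝ) < n)]
    rw [← exp_sub]
    ring_nf
  have hdlog := (hs₀ n).trans hn
  calc s n ^ k * exp (s n) / n
      ≤ (d * log n) ^ k * exp (d * log n) / n := by
        gcongr
        exact hs₀ n
    _ = (d / (1 - d)) ^ k * (((1 - d) * log n) ^ k * exp (-((1 - d) * log n))) := by
        rw [mul_div_assoc, hexp, ← mul_assoc, ← mul_pow, ← mul_assoc, div_mul_cancel₀ _ h₁.ne']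

lemma tendsto_zero_of_le_log_div {t : ℕ → ℝ} {d : ℝ} (ht₀ : ∀ n, 0 ≤ t n)
    (ht : ∀ᶠ n : ℕ in atTop, t n ≤ d * log n / n) : Tendsto t atTop (nhds 0) := by
  refine squeeze_zero' (.of_forall ht₀) ht ?_
  simpa [mul_div_assoc] using (isLittleO_log_id_atTop.tendsto_div_nhds_zero.comp
    tendsto_natCast_atTop_atTop).const_mul d

/-- The bound on the probability that no vertex of a class is isolated which results from the
second moment method, for `n` vertices, a class of probability `m` and isolation parameter
`t = Λ`; the constant `C` accounts for the correlation between two vertices. -/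
noncomputable def isolationBound (n : ℕ) (m C t : ℝ) : ℝ :=
  let s := n * (t / (1 - t) ^ 2)
  exp s / n / m + (exp (C * (s ^ 2 / n)) + s ^ 2 * exp s / n / m) / (1 - t) ^ 2 - 1

lemma tendsto_isolationBound (m C : ℝ) {t : ℕ → ℝ} {d : ℝ} (hd : d < 1) (ht₀ : ∀ n, 0 ≤ t n)
    (ht : ∀ᶠ n : ℕ in atTop, t n ≤ d * log n / n) :
    Tendsto (fun n => isolationBound n m C (t n)) atTop (nhds 0) := by
  have ht_zero := tendsto_zero_of_le_log_div ht₀ ht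
  have hden : Tendsto (fun n => (1 - t n) ^ 2) atTop (nhds 1) := by
    simpa using (ht_zero.const_sub 1).pow 2
  obtain ⟨e, hde, he⟩ := exists_between hd
  set s : ℕ → ℝ := fun n => n * (t n / (1 - t n) ^ 2)
  have hs₀ (n : ℕ) : 0 ≤ s n := mul_nonneg n.cast_nonneg (div_nonneg (ht₀ n) (sq_nonneg _))
  have hs : ∀ᶠ n : ℕ in atTop, s n ≤ e * log n := by
    have hde' : Tendsto (fun n => e * (1 - t n) ^ 2) atTop (nhds e) := by
      simpa using hden.const_mul e
    filter_upwards [ht, hde'.eventually_const_le hde, hden.eventually_const_lt one_pos,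
      eventually_gt_atTop 0] with n hn hde_n hden_n hn_pos
    calc s n = n * t n / (1 - t n) ^ 2 := mul_div_assoc' _ _ _
      _ ≤ d * log n / (1 - t n) ^ 2 :=
        div_le_div_of_nonneg_right ((le_div_iff₀' (Nat.cast_pos.2 hn_pos)).1 hn) hden_n.le
      _ ≤ e * (1 - t n) ^ 2 * log n / (1 - t n) ^ 2 := by gcongr
      _ = e * log n := by rw [mul_right_comm, mul_div_cancel_right₀ _ hden_n.ne']
  have hfirst : Tendsto (fun n => exp (s n) / n) atTop (nhds 0) := by
    simpa using tendsto_pow_mul_exp_div 0 he hs₀ hs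
  have hcross := tendsto_pow_mul_exp_div 2 he hs₀ hs
  have hsq : Tendsto (fun n => s n ^ 2 / n) atTop (nhds 0) :=
    squeeze_zero (fun n => by positivity) (fun n => by
      gcongr
      exact le_mul_of_one_le_right (sq_nonneg _) (one_le_exp (hs₀ n))) hcross
  simpa [isolationBound] using ((hfirst.div_const m).add
    (((hsq.const_mul C).rexp.add (hcross.div_const m)).div hden one_ne_zero)).sub_const 1

lemma one_sub_mul_exp_add_mul_exp_le {a s p α : ℝ} (ha : 0 ≤ a) (hs : 0 ≤ s) (hp : 0 ≤ p)
    (hα₀ : 0 ≤ α) (hα₁ : α ≤ 1) :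
    (1 - p) * exp a + p * exp (α * s) ≤ exp a + p * α * (s * exp s) := by
  calc (1 - p) * exp a + p * exp (α * s)
      ≤ exp a + p * (exp (α * s) - 1) := by
        linarith [mul_le_mul_of_nonneg_left (one_le_exp ha) hp]
    _ ≤ exp a + p * (α * s * exp s) := by
        gcongr
        refine (exp_sub_one_le_mul_exp _).trans ?_
        gcongr
        exact mul_le_of_le_one_left hs hα₁
    _ = exp a + p * α * (s * exp s) := by ring

lemma one_sub_mul_pow_add_mul_pow_le {n k : ℕ} {m C t p α : ℝ} (hn : 0 < n) (hk : k ≤ n)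
    (hm : 0 < m) (hC : 0 ≤ C) (ht₀ : 0 ≤ t) (ht : t ≤ 1 / 2) (hp₀ : 0 ≤ p) (hp₁ : p ≤ 1)
    (hα₀ : 0 ≤ α) (hα₁ : α ≤ 1) (hpα : m * (p * α) ≤ t) :
    (1 - p) * (1 - 2 * t + C * t ^ 2) ^ k + p * (1 - 2 * t + α * t) ^ k ≤
      ((1 - t) ^ k) ^ 2 * (exp (C * ((n * (t / (1 - t) ^ 2)) ^ 2 / n)) +
        (n * (t / (1 - t) ^ 2)) ^ 2 * exp (n * (t / (1 - t) ^ 2)) / n / m) := by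
  set s := n * (t / (1 - t) ^ 2) with hs
  have h₁ : 0 < 1 - t := by linarith
  have hn_pos : (0 : ℝ) < n := by positivity
  have ht_le : t ≤ t / (1 - t) ^ 2 :=
    le_div_self ht₀ (by positivity) (pow_le_one₀ h₁.le (by linarith))
  have hX : (1 - 2 * t + C * t ^ 2) ^ k ≤ ((1 - t) ^ k) ^ 2 * exp (C * (s ^ 2 / n)) := by
    refine (one_sub_two_mul_add_pow_le ht (by positivity) _).trans ?_
    refine mul_le_mul_of_nonneg_left (exp_le_exp.2 ?_) (by positivity)
    calc (k : ℝ) * (C * t ^ 2 / (1 - t) ^ 2)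
        ≤ n * (C * (t / (1 - t) ^ 2 * (t / (1 - t) ^ 2))) := by
          rw [mul_div_assoc, sq t, mul_div_assoc]
          gcongr
      _ = C * (s ^ 2 / n) := by rw [hs]; field_simp
  have hY : (1 - 2 * t + α * t) ^ k ≤ ((1 - t) ^ k) ^ 2 * exp (α * s) := by
    refine (one_sub_two_mul_add_pow_le ht (by positivity) _).trans ?_
    rw [hs, mul_left_comm α, mul_div_assoc]
    gcongr
  calc _ ≤ (1 - p) * (((1 - t) ^ k) ^ 2 * exp (C * (s ^ 2 / n))) +
          p * (((1 - t) ^ k) ^ 2 * exp (α * s)) := by gcongr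
    _ = ((1 - t) ^ k) ^ 2 * ((1 - p) * exp (C * (s ^ 2 / n)) + p * exp (α * s)) := by ring
    _ ≤ _ := by
        have hs₀ : 0 ≤ s := by positivity
        refine mul_le_mul_of_nonneg_left ?_ (by positivity)
        calc _ ≤ exp (C * (s ^ 2 / n)) + p * α * (s * exp s) :=
              one_sub_mul_exp_add_mul_exp_le (by positivity) hs₀ hp₀ hα₀ hα₁
          _ ≤ exp (C * (s ^ 2 / n)) + s / n / m * (s * exp s) := by
              gcongr
              rw [le_div_iff₀' hm, hs, mul_div_cancel_left₀ _ hn_pos.ne']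
              exact hpα.trans ht_le
          _ = exp (C * (s ^ 2 / n)) + s ^ 2 * exp s / n / m := by ring

lemma inv_add_div_sq_sub_one_le_isolationBound {n : ℕ} {m C t p α : ℝ} (hn : 2 ≤ n) (hm : 0 < m)
    (hC : 0 ≤ C) (ht₀ : 0 ≤ t) (ht : t ≤ 1 / 2) (hp₀ : 0 ≤ p) (hp₁ : p ≤ 1) (hα₀ : 0 ≤ α)
    (hα₁ : α ≤ 1) (hpα : m * (p * α) ≤ t) :
    (n * (m * (1 - t) ^ (n - 1)))⁻¹ +
      m ^ 2 * ((1 - p) * (1 - 2 * t + C * t ^ 2) ^ (n - 2) + p * (1 - 2 * t + α * t) ^ (n - 2)) /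
        (m * (1 - t) ^ (n - 1)) ^ 2 - 1 ≤ isolationBound n m C t := by
  have h₁ : 0 < 1 - t := by linarith
  have hpow : (1 - t) ^ (n - 1) = (1 - t) ^ (n - 2) * (1 - t) := by
    rw [← pow_succ]; congr 1; omega
  refine sub_le_sub_right (add_le_add ?_ ?_) 1
  · calc (n * (m * (1 - t) ^ (n - 1)))⁻¹ = ((1 - t) ^ (n - 1))⁻¹ / n / m := by ring
      _ ≤ exp (n * (t / (1 - t) ^ 2)) / n / m := by
        gcongr
        refine (inv_one_sub_pow_le_exp ht₀ (by linarith) _).trans ?_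
        gcongr
        exact n.sub_le 1
  · calc _ = ((1 - p) * (1 - 2 * t + C * t ^ 2) ^ (n - 2) + p * (1 - 2 * t + α * t) ^ (n - 2)) /
          ((1 - t) ^ (n - 2)) ^ 2 / (1 - t) ^ 2 := by rw [hpow]; field_simp
      _ ≤ _ := by
        gcongr
        rw [div_le_iff₀' (by positivity)]
        exact one_sub_mul_pow_add_mul_pow_le (two_pos.trans_le hn) (n.sub_le 2) hm hC ht₀ ht hp₀
          hp₁ hα₀ hα₁ hpα

end RealEstimates

section ZeroLaw

open Finset

lemma pr_noIsolatedNodes_le_isolationBound {n r P : ℕ} {μ : Fin (r + 1) → ℝ}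
    {K : Fin (r + 1) → ℕ} {α : ℝ} {i : Fin (r + 1)} (hn : 2 ≤ n) (hK : ∀ j, K j ≤ P)
    (hμ : ∀ j, 0 ≤ μ j) (hμ_sum : ∑ j, μ j = 1) (hi : 0 < μ i) (hα : α ∈ Set.Icc 0 1)
    (hΛ : α * lamb μ K P i ≤ 1 / 2) :
    pr μ K α (fun c : Config n r P => NoIsolatedNodes c) ≤
      isolationBound n (μ i) (∑ j, (μ j)⁻¹) (α * lamb μ K P i) := by
  set Λ := α * lamb μ K P i
  have hΛ₀ : 0 ≤ Λ := mul_nonneg hα.1 (lamb_nonneg hμ)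
  have hΛ₁ : 0 < 1 - Λ := by linarith
  have hp₀ := pEdge_nonneg P (K i) (K i)
  have hp₁ := pEdge_le_one P (K i) (K i)
  have hC : 0 ≤ ∑ j, (μ j)⁻¹ := sum_nonneg fun j _ => inv_nonneg.2 (hμ j)
  have hpα : μ i * (pEdge P (K i) (K i) * α) ≤ Λ := by
    rw [← mul_assoc, mul_comm]
    exact mul_le_mul_of_nonneg_left (mul_pEdge_le_lamb hμ i) hα.1
  have hsecond : 0 ≤ μ i ^ 2 * ((1 - pEdge P (K i) (K i)) *
      (1 - 2 * Λ + (∑ j, (μ j)⁻¹) * Λ ^ 2) ^ (n - 2) +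
        pEdge P (K i) (K i) * (1 - 2 * Λ + α * Λ) ^ (n - 2)) := by
    have hα₀ := hα.1
    have h₂ : 0 ≤ 1 - 2 * Λ := by linarith
    positivity
  have : Nonempty (Fin n) := ⟨⟨0, two_pos.trans_le hn⟩⟩
  let A (x : Fin n) : Set (Config n r P) := {c | c.1 x = i ∧ Isolated c x}
  calc pr μ K α (fun c : Config n r P => NoIsolatedNodes c)
      ≤ pr μ K α (fun c => c ∈ (⋃ x, A x)ᶜ) := pr_mono hμ hα fun c hc => by
        simpa [A] using fun x _ => hc x
    _ ≤ (n * (μ i * (1 - Λ) ^ (n - 1)))⁻¹ + μ i ^ 2 * ((1 - pEdge P (K i) (K i)) *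
          (1 - 2 * Λ + (∑ j, (μ j)⁻¹) * Λ ^ 2) ^ (n - 2) +
            pEdge P (K i) (K i) * (1 - 2 * Λ + α * Λ) ^ (n - 2)) /
              (μ i * (1 - Λ) ^ (n - 1)) ^ 2 - 1 := by
        rw [pr_eq_sum_indicator]
        simpa only [Fintype.card_fin, Set.ofPred_mem_eq] using
          sum_indicator_compl_iUnion_le (wt_nonneg hμ hα) (sum_wt hK hμ_sum) A
            (mul_pos hi (pow_pos hΛ₁ _)) (pr_isolated hK hμ_sum)
            hsecond fun x y hxy => pr_isolated_pair_le hK hμ hμ_sum hα hxy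
    _ ≤ isolationBound n (μ i) (∑ j, (μ j)⁻¹) Λ :=
        inv_add_div_sq_sub_one_le_isolationBound hn hi hC hΛ₀ hΛ hp₀ hp₁ hα.1 hα.2 hpα

theorem isolated_nodes_zero_law_general {r : ℕ} (μ : Fin (r + 1) → ℝ) (hμ : ∀ j, 0 ≤ μ j)
    (hμ_sum : ∑ j, μ j = 1) (K : ℕ → Fin (r + 1) → ℕ) (P : ℕ → ℕ) (hK : ∀ n j, K n j ≤ P n)
    (α : ℕ → ℝ) (hα : ∀ n, α n ∈ Set.Icc (0 : ℝ) 1) (i : Fin (r + 1)) (hi : 0 < μ i) (d : ℝ)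
    (hd : d < 1)
    (hscal : ∀ᶠ n : ℕ in atTop, α n * lamb μ (K n) (P n) i ≤ d * Real.log n / n) :
    Tendsto (fun n => pr μ (K n) (α n) (fun c : Config n r (P n) => NoIsolatedNodes c))
      atTop (nhds 0) := by
  have hΛ₀ (n : ℕ) : 0 ≤ α n * lamb μ (K n) (P n) i := mul_nonneg (hα n).1 (lamb_nonneg hμ)
  refine squeeze_zero' (.of_forall fun n => pr_nonneg hμ (hα n) _) ?_
    (tendsto_isolationBound (μ i) (∑ j, (μ j)⁻¹) hd hΛ₀ hscal)
  filter_upwards [eventually_ge_atTop 2,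
    (tendsto_zero_of_le_log_div hΛ₀ hscal).eventually_le_const one_half_pos] with n hn hΛ
  exact pr_noIsolatedNodes_le_isolationBound hn (hK n) hμ hμ_sum hi (hα n) hΛ

end ZeroLaw

/-- zero-law for absence of isolated nodes:
under the scaling `Λ₁(n) = αₙ λ₁(n) = cₙ log n / n` with `cₙ → c < 1`, the probability
that `G(n; μ, Kₙ, Pₙ, αₙ)` has no isolated nodes tends to `0`. -/
theorem isolated_nodes_zero_law {r : ℕ} (μ : Fin (r + 1) → ℝ)
    (hμpos : ∀ i, 0 < μ i) (hμsum : ∑ i, μ i = 1)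
    (K : ℕ → Fin (r + 1) → ℕ) (P : ℕ → ℕ) (α : ℕ → ℝ)
    (hK1 : ∀ n, 1 ≤ K n 0) (hKmono : ∀ n, Monotone (K n))
    (hKP : ∀ n, 2 * K n (Fin.last r) ≤ P n)
    (hα : ∀ n, α n ∈ Set.Ioo (0 : ℝ) 1)
    (cseq : ℕ → ℝ) (c : ℝ)
    (hscal : ∀ n, 2 ≤ n → α n * lamb μ (K n) (P n) 0 = cseq n * Real.log n / n)
    (hc : Tendsto cseq atTop (nhds c)) (hclt : c < 1) :
    Tendsto (fun n => pr μ (K n) (α n) (fun cfg : Config n r (P n) => NoIsolatedNodes cfg))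
      atTop (nhds 0) := by
  obtain ⟨d, hcd, hd⟩ := exists_between hclt
  have hKP' (n : ℕ) (j : Fin (r + 1)) : K n j ≤ P n :=
    (hKmono n j.le_last).trans ((Nat.le_mul_of_pos_left _ two_pos).trans (hKP n))
  refine isolated_nodes_zero_law_general μ (fun j => (hμpos j).le) hμsum K P hKP' α
    (fun n => Set.Ioo_subset_Icc_self (hα n)) 0 (hμpos 0) d hd ?_
  filter_upwards [eventually_ge_atTop 2, hc.eventually_le_const hcd] with n hn hcn
  rw [hscal n hn]
  gcongr
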